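/- For every integer n ≥ 0, ∑_{i=0}^{n} binom(2n, 2i) · 𝔠_{2i} · 𝔠_{2(n-i)+2} = (2n)! · ∑_{l=0}^{n+1} (-1)^{n-l-1} (2l-1)(3n² - 3nl + 2l² + 4n - 3l + 1)(2n-2l-1)!! / (3 · 2^{n-l} (n-l+1)! (2l)!) · 𝔠_{2l}, where 2^{n-l} is interpreted in ℚ (so for l = n+1 it equals 1/2). -/

import Mathlib

/-- Stirling numbers of the first kind with level 2. -/
def T2 : ℕ → ℕ → ℕ
  | 0, 0 => 1
  | 0, _ + 1 => 0
  | _ + 1, 0 => 0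
  | n + 1, m + 1 => T2 n m + n ^ 2 * T2 n (m + 1)

/-- Cauchy numbers with level 2: `cauchy2 n = 𝔠_{2n}`. -/
def cauchy2 (n : ℕ) : ℚ :=
  ∑ m ∈ Finset.range (n + 1), (-4 : ℚ) ^ (n - m) * (T2 n m : ℚ) / (2 * (m : ℚ) + 1)

/-- `odFact i = (2i-1)!!`, with `odFact 0 = (-1)!! = 1`. -/
def odFact : ℕ → ℚ
  | 0 => 1
  | i + 1 => (2 * (i : ℚ) + 1) * odFact i

/-- `ddf j = (2j-1)!!`, the odd double factorial extended to all integers: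
for `j ≥ 0` it is `(2j-1)(2j-3)⋯1` (with `(-1)!! = 1`), and for `j = -i < 0`
it is `(-(2i+1))!! = (-1)^i/(2i-1)!!`. -/
def ddf (j : ℤ) : ℚ :=
  if 0 ≤ j then odFact j.toNat else (-1 : ℚ) ^ (-j).toNat / odFact (-j).toNat

/-!
Let `C = ∑ 𝔠_{2n} Xⁿ / (2n)!` and `θ = X · d/dX`. The even powers of `arcsinh` satisfy
`(1 + s²) y'' + s y' = 2m(2m - 1) arcsinh^(2m-2) s`, which translates into the recurrence of the
level 2 Stirling numbers; hence `C(s²) = sinh (arcsinh s) / arcsinh s = s / arcsinh s`, and `C`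
solves the Riccati equation `2 θC = C - C² / √(1 + X)`.

With `e = 2 θC - C`, so that `√(1 + X) e = -C²`, the convolution sum is `2 (2n)!` times the
coefficient of `X^(n+1)` in `C · θe`. The Riccati equation makes this product linear in `e`: for
`r = √(1 + X)`, `3 C θe = 2 θ(re) - 2 θ²(re) - (θ²r) e + (θr)(θe)`. Expanding `r` by the binomial
theorem, whose coefficients are odd double factorials up to elementary factors, gives the right-hand
side.
-/

section

open PowerSeries

theorem odFact_pos (i : ℕ) : 0 < odFact i := by
  induction i with
  | zero => simp [odFact]
  | succ i ih => rw [odFact]; positivity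

theorem ddf_natCast (i : ℕ) : ddf i = odFact i := by
  simp [ddf]

theorem ddf_neg_natCast (i : ℕ) : ddf (-i) = (-1) ^ i / odFact i := by
  obtain _ | i := i
  · simp [ddf, odFact]
  · rw [ddf, if_neg (by omega), neg_neg, Int.toNat_natCast]

theorem ddf_add_one (j : ℤ) : ddf (j + 1) = (2 * j + 1) * ddf j := by
  obtain i | i := j
  · rw [Int.ofNat_eq_natCast, ← Nat.cast_succ, ddf_natCast, ddf_natCast, odFact, Int.cast_natCast]
  · have hi : Int.negSucc i + 1 = -i := by omega
    rw [hi, Int.negSucc_eq, ← Nat.cast_succ, ddf_neg_natCast, ddf_neg_natCast, odFact, pow_succ]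
    have := (odFact_pos i).ne'
    push_cast
    field_simp
    ring

theorem succ_mul_ringChoose_succ {R : Type*} [CommRing R] [BinomialRing R] (r : R) (k : ℕ) :
    ((k : R) + 1) * Ring.choose r (k + 1) = (r - k) * Ring.choose r k := by
  have h := Ring.choose_smul_choose r k.le_succ
  simp only [Nat.succ_eq_add_one, Nat.choose_succ_self_right, add_tsub_cancel_left,
    Ring.choose_one_right, nsmul_eq_mul, Nat.cast_add, Nat.cast_one] at h
  rw [h, mul_comm]

theorem ringChoose_half (k : ℕ) :
    Ring.choose (1 / 2 : ℚ) k =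
      (-1) ^ ((k : ℤ) - 1) * ddf ((k : ℤ) - 1) / (2 ^ k * (k.factorial : ℚ)) := by
  induction k with
  | zero => simp [ddf, odFact]
  | succ k ih =>
    have hk : (k : ℚ) + 1 ≠ 0 := by positivity
    have hj : ((k + 1 : ℕ) : ℤ) - 1 = ((k : ℤ) - 1) + 1 := by push_cast; ring
    apply mul_left_cancel₀ hk
    rw [succ_mul_ringChoose_succ, ih, hj, ddf_add_one, zpow_add_one₀ (by norm_num),
      Nat.factorial_succ]
    push_cast
    field_simp
    ring

theorem T2_eq_zero_of_lt {n m : ℕ} (h : n < m) : T2 n m = 0 := by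
  induction n generalizing m with
  | zero => obtain ⟨m, rfl⟩ := Nat.exists_eq_add_of_lt h; simp [T2]
  | succ n ih =>
    obtain _ | m := m
    · omega
    · simp [T2, ih (show n < m by omega), ih (show n < m + 1 by omega)]

-- For `n ≤ m` the exponent `n - (m + 1)` truncates, but then `T2 n (m + 1)` vanishes.
theorem neg_four_pow_sub_mul_T2_succ (n m : ℕ) :
    (-4 : ℚ) ^ (n - m) * T2 n (m + 1) = -4 * ((-4) ^ (n - (m + 1)) * T2 n (m + 1)) := by
  obtain hm | hm := lt_or_ge n (m + 1)
  · simp [T2_eq_zero_of_lt hm]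
  · rw [← mul_assoc, ← pow_succ', ← Nat.sub_sub, Nat.sub_add_cancel (by omega)]

theorem factorial_two_mul_succ (i : ℕ) :
    (2 * (i + 1)).factorial = (2 * i + 2) * (2 * i + 1) * (2 * i).factorial := by
  rw [Nat.mul_succ, Nat.factorial_succ, Nat.factorial_succ, mul_assoc]

/-- The Euler derivation `X · d/dX` of `R⟦X⟧`, which multiplies the `n`-th coefficient by `n`. -/
noncomputable def eulerDerivation (R : Type*) [CommRing R] : Derivation R R⟦X⟧ R⟦X⟧ :=
  (X : R⟦X⟧) • d⁄dX R

section

variable {R : Type*} [CommRing R]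

theorem eulerDerivation_apply (f : R⟦X⟧) : eulerDerivation R f = X * d⁄dX R f := rfl

theorem coeff_eulerDerivation (f : R⟦X⟧) (n : ℕ) :
    coeff n (eulerDerivation R f) = n * coeff n f := by
  cases n with
  | zero => simp [eulerDerivation_apply]
  | succ n => rw [eulerDerivation_apply, coeff_succ_X_mul, coeff_derivative]; push_cast; ring

theorem eulerDerivation_expand (p : ℕ) (hp : p ≠ 0) (f : R⟦X⟧) :
    eulerDerivation R (expand p hp f) = (p : R⟦X⟧) * expand p hp (eulerDerivation R f) := by
  rw [eulerDerivation_apply, expand_apply, expand_apply, derivative_subst (HasSubst.X_pow hp),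
    eulerDerivation_apply, subst_mul (HasSubst.X_pow hp), subst_X (HasSubst.X_pow hp),
    derivative_pow, derivative_X]
  linear_combination p * (d⁄dX R f).subst (X ^ p : R⟦X⟧) * mul_pow_sub_one hp (X : R⟦X⟧)

theorem expand_injective (p : ℕ) (hp : p ≠ 0) :
    Function.Injective (expand p hp : R⟦X⟧ →ₐ[R] R⟦X⟧) := fun f g h ↦ by
  ext n
  rw [← coeff_expand_mul p hp f, h, coeff_expand_mul]

theorem constantCoeff_subst_of_constantCoeff_eq_zero {a : R⟦X⟧} (ha : constantCoeff a = 0)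
    (f : R⟦X⟧) : constantCoeff (f.subst a) = constantCoeff f := by
  rw [← coeff_zero_eq_constantCoeff_apply, coeff_subst' (HasSubst.of_constantCoeff_zero' ha),
    finsum_eq_single _ 0 fun d hd ↦ by simp [ha, hd]]
  simp

end

theorem three_mul_self_mul_derivation_of_riccati {R A : Type*} [CommRing R] [CommRing A]
    [Algebra R A] (θ : Derivation R A A) {r c e : A} (hru : IsUnit r)
    (hr : r * θ (θ r) + θ r ^ 2 = r * θ r) (he : e = 2 * θ c - c) (hre : r * e = -c ^ 2) :
    3 * (c * θ e) = 2 * θ (r * e) - 2 * θ (θ (r * e)) - θ (θ r) * e + θ r * θ e := by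
  set w := r * e with hw
  have hθw : θ w = r * θ e + e * θ r := by simp [hw, Derivation.leibniz]
  have hce : c * e = w - θ w := by
    have h : θ w = -(2 * c * θ c) := by
      simp only [hre, map_neg, pow_two, Derivation.leibniz, smul_eq_mul]
      ring
    linear_combination c * he + h - hre
  have hcθe : 2 * (c * θ e) = 2 * (θ w - θ (θ w)) - e ^ 2 - (w - θ w) := by
    have h := congrArg θ hce
    simp only [Derivation.leibniz, map_sub, smul_eq_mul] at h
    linear_combination 2 * h - hce + e * he
  have hee : r * e ^ 2 = r * (c * θ e) - r * (w - θ w) + θ r * (w - θ w) := by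
    linear_combination e * (hre - hw) - c * (hce + hw - hθw) + (θ r - r) * hce
  apply hru.mul_left_cancel
  linear_combination r * hcθe - hee + θ r * (hθw - hw) + e * hr

instance : CharZero ℚ⟦X⟧ := algebraRat.charZero _

/-- The series `√(1 + X)`. -/
noncomputable def sqrtSeries : ℚ⟦X⟧ := binomialSeries ℚ (1 / 2 : ℚ)

/-- The series `1 / √(1 + X)`. -/
noncomputable def invSqrtSeries : ℚ⟦X⟧ := binomialSeries ℚ (-1 / 2 : ℚ)

theorem sqrtSeries_mul_self : sqrtSeries * sqrtSeries = 1 + X := by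
  rw [sqrtSeries, ← binomialSeries_add, ← pow_one (1 + X), ← binomialSeries_nat (R := ℚ)]
  norm_num

theorem sqrtSeries_mul_invSqrtSeries : sqrtSeries * invSqrtSeries = 1 := by
  rw [sqrtSeries, invSqrtSeries, ← binomialSeries_add, ← binomialSeries_zero (R := ℚ)]
  norm_num

theorem two_mul_sqrtSeries_mul_eulerDerivation :
    2 * (sqrtSeries * eulerDerivation ℚ sqrtSeries) = X := by
  have h := congrArg (eulerDerivation ℚ) sqrtSeries_mul_self
  simp only [Derivation.leibniz, map_add, Derivation.map_one_eq_zero, eulerDerivation_apply X,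
    derivative_X, smul_eq_mul] at h
  linear_combination h

theorem sqrtSeries_mul_eulerDerivation_eulerDerivation_add_sq :
    sqrtSeries * eulerDerivation ℚ (eulerDerivation ℚ sqrtSeries) +
      eulerDerivation ℚ sqrtSeries ^ 2 = sqrtSeries * eulerDerivation ℚ sqrtSeries := by
  have h := congrArg (eulerDerivation ℚ) two_mul_sqrtSeries_mul_eulerDerivation
  simp only [two_mul, map_add, Derivation.leibniz, eulerDerivation_apply X, derivative_X,
    smul_eq_mul] at h
  apply mul_left_cancel₀ (two_ne_zero (α := ℚ⟦X⟧))
  linear_combination h - two_mul_sqrtSeries_mul_eulerDerivation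

/-- The series `arcsinh √X / √X`. -/
noncomputable def arcsinhQuotient : ℚ⟦X⟧ :=
  mk fun n ↦ coeff n invSqrtSeries / (2 * n + 1)

/-- The series `arcsinh X`. -/
noncomputable def arcsinhSeries : ℚ⟦X⟧ := X * expand 2 two_ne_zero arcsinhQuotient

theorem two_mul_eulerDerivation_arcsinhQuotient_add :
    2 * eulerDerivation ℚ arcsinhQuotient + arcsinhQuotient = invSqrtSeries := by
  ext n
  simp only [two_mul, map_add, coeff_eulerDerivation, arcsinhQuotient, coeff_mk]
  field_simp

theorem constantCoeff_arcsinhSeries : constantCoeff arcsinhSeries = 0 := by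
  simp [arcsinhSeries]

theorem hasSubst_arcsinhSeries : HasSubst arcsinhSeries :=
  HasSubst.of_constantCoeff_zero' constantCoeff_arcsinhSeries

theorem derivative_arcsinhSeries :
    d⁄dX ℚ arcsinhSeries = expand 2 two_ne_zero invSqrtSeries := by
  have h := eulerDerivation_expand 2 two_ne_zero arcsinhQuotient
  rw [eulerDerivation_apply] at h
  rw [arcsinhSeries, Derivation.leibniz, derivative_X,
    ← two_mul_eulerDerivation_arcsinhQuotient_add, map_add, map_mul, map_ofNat]
  simp only [smul_eq_mul]
  linear_combination h

theorem one_add_X_sq_mul_derivative_arcsinhSeries_sq :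
    (1 + X ^ 2) * d⁄dX ℚ arcsinhSeries ^ 2 = 1 := by
  have h : (1 + X) * invSqrtSeries ^ 2 = 1 := by
    rw [← sqrtSeries_mul_self]
    linear_combination (sqrtSeries * invSqrtSeries + 1) * sqrtSeries_mul_invSqrtSeries
  simpa [derivative_arcsinhSeries] using congrArg (expand 2 two_ne_zero) h

theorem arcsinhSeries_differential_equation :
    (1 + X ^ 2) * d⁄dX ℚ (d⁄dX ℚ arcsinhSeries) + X * d⁄dX ℚ arcsinhSeries = 0 := by
  have hsq := one_add_X_sq_mul_derivative_arcsinhSeries_sq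
  have hderiv := congrArg (d⁄dX ℚ) hsq
  simp only [Derivation.leibniz, Derivation.leibniz_pow, map_add, Derivation.map_one_eq_zero,
    derivative_X, smul_eq_mul, nsmul_eq_mul, Nat.cast_ofNat, Nat.add_one_sub_one, pow_one] at hderiv
  set u := d⁄dX ℚ arcsinhSeries
  apply mul_left_cancel₀ (two_ne_zero (α := ℚ⟦X⟧))
  linear_combination (1 + X ^ 2) * u * hderiv - 2 * ((1 + X ^ 2) * d⁄dX ℚ u + X * u) * hsq

theorem arcsinhSeries_pow_differential_equation (k : ℕ) :
    d⁄dX ℚ (d⁄dX ℚ (arcsinhSeries ^ (k + 2))) +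
      eulerDerivation ℚ (eulerDerivation ℚ (arcsinhSeries ^ (k + 2))) =
    ((k + 2) * (k + 1) : ℚ) • arcsinhSeries ^ k := by
  simp only [eulerDerivation_apply, derivative_pow, Derivation.leibniz, Derivation.map_natCast,
    derivative_X, smul_eq_mul, smul_eq_C_mul, Nat.add_sub_cancel, Nat.add_succ_sub_one, map_mul,
    map_add, map_natCast, map_ofNat, map_one]
  push_cast
  linear_combination
    ((k + 2) * arcsinhSeries ^ (k + 1) : ℚ⟦X⟧) * arcsinhSeries_differential_equation +
    ((k + 2) * (k + 1) * arcsinhSeries ^ k : ℚ⟦X⟧) *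
      one_add_X_sq_mul_derivative_arcsinhSeries_sq

theorem coeff_arcsinhSeries_pow_recurrence (k n : ℕ) :
    ((n + 2) * (n + 1) : ℚ) * coeff (n + 2) (arcsinhSeries ^ (k + 2)) +
      (n : ℚ) ^ 2 * coeff n (arcsinhSeries ^ (k + 2)) =
    ((k + 2) * (k + 1) : ℚ) * coeff n (arcsinhSeries ^ k) := by
  have h := congrArg (coeff n) (arcsinhSeries_pow_differential_equation k)
  rw [map_add, coeff_derivative, coeff_derivative, coeff_eulerDerivation, coeff_eulerDerivation,
    coeff_smul, smul_eq_mul] at h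
  push_cast at h
  linear_combination h

theorem coeff_arcsinhSeries_pow (n m : ℕ) :
    coeff (2 * n) (arcsinhSeries ^ (2 * m)) =
      ((2 * m).factorial : ℚ) / (2 * n).factorial * ((-4) ^ (n - m) * T2 n m) := by
  induction n generalizing m with
  | zero =>
    obtain _ | m := m
    · simp [T2]
    · simp [T2, constantCoeff_arcsinhSeries]
  | succ n ih =>
    obtain _ | m := m
    · simp [T2, coeff_one]
    · have h := coeff_arcsinhSeries_pow_recurrence (2 * m) (2 * n)
      rw [← Nat.mul_succ, ← Nat.mul_succ, ih, ih] at h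
      simp only [Nat.succ_eq_add_one, factorial_two_mul_succ, T2, Nat.add_sub_add_right] at h ⊢
      push_cast at h ⊢
      field_simp at h ⊢
      linear_combination h +
        ((m + 1) * (2 * m + 1) * (2 * m).factorial * (n : ℚ) ^ 2) *
          -neg_four_pow_sub_mul_T2_succ n m

theorem arcsinhSeries_sq :
    arcsinhSeries ^ 2 = expand 2 two_ne_zero (X * arcsinhQuotient ^ 2) := by
  rw [arcsinhSeries, map_mul, map_pow, expand_X]
  ring

/-- The series `sinh √X / √X`. -/
noncomputable def sinhQuotient : ℚ⟦X⟧ := mk fun m ↦ 1 / ((2 * m + 1).factorial : ℚ)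

theorem two_mul_X_mul_expand_sinhQuotient :
    2 * (X * expand 2 two_ne_zero sinhQuotient) = exp ℚ - evalNegHom (exp ℚ) := by
  ext n
  rw [two_mul, map_add, map_sub, evalNegHom, coeff_rescale, coeff_exp]
  obtain _ | n := n
  · simp
  rw [coeff_succ_X_mul]
  obtain ⟨m, rfl | rfl⟩ := n.even_or_odd'
  · rw [coeff_expand_mul, sinhQuotient, coeff_mk, Odd.neg_one_pow (odd_two_mul_add_one m)]
    simp
  · rw [coeff_expand_of_not_dvd _ _ _ (by omega), Even.neg_one_pow (by grind)]
    simp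

theorem expand_sqrtSeries_mul_derivative_arcsinhSeries :
    expand 2 two_ne_zero sqrtSeries * d⁄dX ℚ arcsinhSeries = 1 := by
  rw [derivative_arcsinhSeries, ← map_mul, sqrtSeries_mul_invSqrtSeries, map_one]

theorem expand_sqrtSeries_sq :
    expand 2 two_ne_zero sqrtSeries ^ 2 = 1 + X ^ 2 := by
  simp [pow_two, ← map_mul, sqrtSeries_mul_self]

theorem derivative_expand_sqrtSeries :
    d⁄dX ℚ (expand 2 two_ne_zero sqrtSeries) = X * d⁄dX ℚ arcsinhSeries := by
  have h := congrArg (d⁄dX ℚ) expand_sqrtSeries_sq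
  simp only [Derivation.map_one_eq_zero, map_add, derivative_pow, derivative_X] at h
  apply mul_left_cancel₀ (two_ne_zero (α := ℚ⟦X⟧))
  push_cast at h
  linear_combination d⁄dX ℚ arcsinhSeries * h -
    2 * d⁄dX ℚ (expand 2 two_ne_zero sqrtSeries) *
      expand_sqrtSeries_mul_derivative_arcsinhSeries

theorem exp_subst_arcsinhSeries :
    (exp ℚ).subst arcsinhSeries = expand 2 two_ne_zero sqrtSeries + X := by
  set r := expand 2 two_ne_zero sqrtSeries
  have hinv : (exp ℚ).subst arcsinhSeries * (r - X) = 1 := by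
    apply derivative.ext (R := ℚ)
    · rw [Derivation.leibniz, derivative_subst hasSubst_arcsinhSeries, derivative_exp, map_sub,
        derivative_X, Derivation.map_one_eq_zero, derivative_expand_sqrtSeries]
      simp only [smul_eq_mul]
      linear_combination subst arcsinhSeries (exp ℚ) *
        expand_sqrtSeries_mul_derivative_arcsinhSeries
    · rw [map_mul, constantCoeff_subst_of_constantCoeff_eq_zero constantCoeff_arcsinhSeries]
      simp [r, sqrtSeries]
  linear_combination (r + X) * hinv - subst arcsinhSeries (exp ℚ) * expand_sqrtSeries_sq

theorem evalNegHom_exp_subst_arcsinhSeries :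
    (evalNegHom (exp ℚ)).subst arcsinhSeries = expand 2 two_ne_zero sqrtSeries - X := by
  have h := congrArg (subst arcsinhSeries) (exp_mul_exp_neg_eq_one (A := ℚ))
  rw [subst_mul hasSubst_arcsinhSeries, exp_subst_arcsinhSeries,
    ← coe_substAlgHom hasSubst_arcsinhSeries, map_one] at h
  rw [← coe_substAlgHom hasSubst_arcsinhSeries]
  linear_combination (expand 2 two_ne_zero sqrtSeries - X) * h -
    substAlgHom hasSubst_arcsinhSeries (evalNegHom (exp ℚ)) * expand_sqrtSeries_sq

theorem arcsinhSeries_mul_sinhQuotient_subst :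
    arcsinhSeries * sinhQuotient.subst (arcsinhSeries ^ 2) = X := by
  have hA := hasSubst_arcsinhSeries
  have h := congrArg (subst arcsinhSeries) two_mul_X_mul_expand_sinhQuotient
  rw [subst_sub hA, exp_subst_arcsinhSeries, evalNegHom_exp_subst_arcsinhSeries, two_mul,
    subst_add hA, subst_mul hA, subst_X hA, expand_apply,
    subst_comp_subst_apply (HasSubst.X_pow two_ne_zero) hA, subst_pow hA, subst_X hA] at h
  apply mul_left_cancel₀ (two_ne_zero (α := ℚ⟦X⟧))
  linear_combination h

theorem hasSubst_X_mul_arcsinhQuotient_sq : HasSubst (X * arcsinhQuotient ^ 2) :=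
  HasSubst.of_constantCoeff_zero' (by simp)

theorem arcsinhQuotient_mul_sinhQuotient_subst :
    arcsinhQuotient * sinhQuotient.subst (X * arcsinhQuotient ^ 2) = 1 := by
  apply expand_injective 2 two_ne_zero
  apply mul_left_cancel₀ (X_ne_zero (R := ℚ))
  rw [map_mul, map_one, mul_one, ← mul_assoc, ← arcsinhSeries,
    expand_apply 2 two_ne_zero (subst _ _),
    subst_comp_subst_apply hasSubst_X_mul_arcsinhQuotient_sq (HasSubst.X_pow two_ne_zero),
    ← expand_apply 2 two_ne_zero, ← arcsinhSeries_sq, arcsinhSeries_mul_sinhQuotient_subst]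

/-- The exponential generating series `∑ 𝔠_{2n} Xⁿ / (2n)!`. -/
noncomputable def cauchySeries : ℚ⟦X⟧ := mk fun n ↦ cauchy2 n / ((2 * n).factorial : ℚ)

theorem cauchySeries_eq_subst :
    cauchySeries = sinhQuotient.subst (X * arcsinhQuotient ^ 2) := by
  ext n
  have hterm (m : ℕ) : coeff m sinhQuotient • coeff n ((X * arcsinhQuotient ^ 2) ^ m) =
      (-4) ^ (n - m) * T2 n m / (2 * m + 1) / ((2 * n).factorial : ℚ) := by
    rw [← coeff_expand_mul 2 two_ne_zero (_ ^ m), map_pow, ← arcsinhSeries_sq, ← pow_mul,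
      coeff_arcsinhSeries_pow, sinhQuotient, coeff_mk, Nat.factorial_succ, smul_eq_mul]
    push_cast
    field_simp
  rw [coeff_subst' hasSubst_X_mul_arcsinhQuotient_sq, finsum_congr hterm,
    finsum_eq_sum_of_support_subset (s := Finset.range (n + 1))]
  · rw [cauchySeries, coeff_mk, cauchy2, Finset.sum_div]
  · intro m hm
    contrapose! hm
    have : n < m := by simpa using hm
    simp [T2_eq_zero_of_lt this]

theorem arcsinhQuotient_mul_cauchySeries : arcsinhQuotient * cauchySeries = 1 := by
  rw [cauchySeries_eq_subst, arcsinhQuotient_mul_sinhQuotient_subst]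

theorem two_mul_eulerDerivation_cauchySeries :
    2 * eulerDerivation ℚ cauchySeries = cauchySeries - invSqrtSeries * cauchySeries ^ 2 := by
  have h := congrArg (eulerDerivation ℚ) arcsinhQuotient_mul_cauchySeries
  simp only [Derivation.leibniz, Derivation.map_one_eq_zero, smul_eq_mul] at h
  set c := cauchySeries
  set θ := eulerDerivation ℚ
  linear_combination 2 * c * h - c ^ 2 * two_mul_eulerDerivation_arcsinhQuotient_add +
    (c - 2 * θ c) * arcsinhQuotient_mul_cauchySeries

/-- The series `2 X C' - C = ∑ (2n - 1) 𝔠_{2n} Xⁿ / (2n)!`, where `C` is `cauchySeries`. -/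
noncomputable def weightedCauchySeries : ℚ⟦X⟧ :=
  2 * eulerDerivation ℚ cauchySeries - cauchySeries

theorem coeff_weightedCauchySeries (l : ℕ) :
    coeff l weightedCauchySeries = (2 * l - 1) * cauchy2 l / ((2 * l).factorial : ℚ) := by
  simp only [weightedCauchySeries, two_mul (eulerDerivation ℚ _), map_sub, map_add,
    coeff_eulerDerivation, cauchySeries, coeff_mk]
  ring

theorem sqrtSeries_mul_weightedCauchySeries :
    sqrtSeries * weightedCauchySeries = -cauchySeries ^ 2 := by
  rw [weightedCauchySeries, two_mul_eulerDerivation_cauchySeries]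
  linear_combination -cauchySeries ^ 2 * sqrtSeries_mul_invSqrtSeries

theorem three_mul_coeff_cauchySeries_mul_eulerDerivation (k : ℕ) :
    3 * coeff k (cauchySeries * eulerDerivation ℚ weightedCauchySeries) =
      ∑ l ∈ Finset.range (k + 1), (2 * k - 3 * k ^ 2 + 3 * k * l - 2 * l ^ 2 : ℚ) *
        Ring.choose (1 / 2 : ℚ) (k - l) * coeff l weightedCauchySeries := by
  have h := congrArg (coeff k) <| three_mul_self_mul_derivation_of_riccati (eulerDerivation ℚ)
    (.of_mul_eq_one _ sqrtSeries_mul_invSqrtSeries)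
    sqrtSeries_mul_eulerDerivation_eulerDerivation_add_sq
    (show weightedCauchySeries = _ from rfl) sqrtSeries_mul_weightedCauchySeries
  rw [← map_ofNat C 3, ← map_ofNat C 2] at h
  simp only [map_add, map_sub, coeff_C_mul, coeff_eulerDerivation] at h
  rw [h]
  simp only [coeff_mul, Finset.mul_sum, ← Finset.sum_add_distrib, ← Finset.sum_sub_distrib]
  rw [← Finset.Nat.sum_antidiagonal_swap, Finset.Nat.sum_antidiagonal_eq_sum_range_succ_mk]
  refine Finset.sum_congr rfl fun l hl ↦ ?_
  have hlk : l ≤ k := Finset.mem_range_succ_iff.1 hl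
  simp only [Prod.fst_swap, Prod.snd_swap, coeff_eulerDerivation, sqrtSeries, binomialSeries_coeff,
    Nat.cast_sub hlk, smul_eq_mul]
  ring

theorem sum_choose_mul_cauchy2_mul_cauchy2 (n : ℕ) :
    ∑ i ∈ Finset.range (n + 1),
        (Nat.choose (2 * n) (2 * i) : ℚ) * cauchy2 i * cauchy2 (n - i + 1) =
      ((2 * n).factorial : ℚ) *
        (2 * coeff (n + 1) (cauchySeries * eulerDerivation ℚ weightedCauchySeries)) := by
  rw [coeff_mul, Finset.Nat.sum_antidiagonal_succ', coeff_eulerDerivation,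
    Finset.Nat.sum_antidiagonal_eq_sum_range_succ_mk, Nat.cast_zero, zero_mul, mul_zero, zero_add,
    Finset.mul_sum, Finset.mul_sum]
  refine Finset.sum_congr rfl fun i hi ↦ ?_
  have hin : i ≤ n := Finset.mem_range_succ_iff.1 hi
  rw [Nat.cast_choose ℚ (by omega : 2 * i ≤ 2 * n), ← Nat.mul_sub,
    coeff_eulerDerivation, coeff_weightedCauchySeries, cauchySeries, coeff_mk,
    factorial_two_mul_succ]
  push_cast
  field_simp
  ring

end

theorem statement3 (n : ℕ) :
    ∑ i ∈ Finset.range (n + 1),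
        (Nat.choose (2 * n) (2 * i) : ℚ) * cauchy2 i * cauchy2 (n - i + 1) =
    (Nat.factorial (2 * n) : ℚ) * ∑ l ∈ Finset.range (n + 2),
        (-1 : ℚ) ^ ((n : ℤ) - l - 1) * (2 * (l : ℚ) - 1) *
          (3 * (n : ℚ) ^ 2 - 3 * (n : ℚ) * (l : ℚ) + 2 * (l : ℚ) ^ 2 +
            4 * (n : ℚ) - 3 * (l : ℚ) + 1) * ddf ((n : ℤ) - l) /
          (3 * (2 : ℚ) ^ ((n : ℤ) - l) * (Nat.factorial (n + 1 - l) : ℚ) *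
            (Nat.factorial (2 * l) : ℚ)) * cauchy2 l := by
  rw [sum_choose_mul_cauchy2_mul_cauchy2]
  congr 1
  apply mul_left_cancel₀ (three_ne_zero (α := ℚ))
  rw [mul_left_comm, three_mul_coeff_cauchySeries_mul_eulerDerivation, Finset.mul_sum,
    Finset.mul_sum]
  refine Finset.sum_congr rfl fun l hl ↦ ?_
  have hln : l ≤ n + 1 := Finset.mem_range_succ_iff.1 hl
  have hsub : ((n + 1 - l : ℕ) : ℤ) - 1 = n - l := by omega
  have htwo : (2 : ℚ) ^ (n + 1 - l) = 2 * 2 ^ ((n : ℤ) - l) := by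
    rw [← zpow_natCast, ← zpow_one_add₀ two_ne_zero, ← hsub, add_sub_cancel]
  rw [ringChoose_half, hsub, htwo, coeff_weightedCauchySeries, zpow_sub_one₀ (by norm_num)]
  push_cast
  field_simp
  ring
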